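/- arXiv:2605.04038 — 5 statements merged into one kernel-verified Lean document; each statement's English description precedes it below -/
import Mathlib

section
/- Let S be a set and let u, d : 𝒫(S) → 𝒫(S) be functions that preserve arbitrary unions. Then the pair (u, d) is parallel if and only if for all x, y ∈ S: x ∈ d({y}) ⇔ y ∈ u({x}). -/
/-- A pair of functions on a meet-semilattice is *parallel* if
`u x ⊓ y ≤ u (x ⊓ d y)` and `x ⊓ d y ≤ d (u x ⊓ y)` for all `x, y`. -/
def IsParallel {L : Type*} [SemilatticeInf L] (u d : L → L) : Prop :=
  ∀ x y : L, u x ⊓ y ≤ u (x ⊓ d y) ∧ x ⊓ d y ≤ d (u x ⊓ y)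

/-!
For bottom-preserving maps of a Boolean algebra, being parallel amounts to being *conjugate*:
`u x` is disjoint from `y` exactly when `x` is disjoint from `d y`. Conjugacy of
union-preserving operators on sets can be tested on singletons, where disjointness is
non-membership.
-/

/-- Conjugate maps in the sense of Jónsson and Tarski: a reformulation of parallelism on Boolean
algebras that also makes sense for maps between two different orders. -/
def IsConjugate {α β : Type*} [PartialOrder α] [OrderBot α] [PartialOrder β] [OrderBot β]
    (u : α → β) (d : β → α) : Prop :=
  ∀ x y, Disjoint (u x) y ↔ Disjoint x (d y)

namespace IsConjugate

variable {α β : Type*}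

theorem symm [PartialOrder α] [OrderBot α] [PartialOrder β] [OrderBot β]
    {u : α → β} {d : β → α} (h : IsConjugate u d) : IsConjugate d u :=
  fun y x ↦ by rw [disjoint_comm, ← h x y, disjoint_comm]

theorem monotone [PartialOrder α] [OrderBot α] [BooleanAlgebra β]
    {u : α → β} {d : β → α} (h : IsConjugate u d) : Monotone u := by
  intro x x' hxx'
  have hx' : Disjoint x' (d (u x')ᶜ) := (h _ _).1 disjoint_compl_right
  exact disjoint_compl_right_iff.1 ((h _ _).2 (hx'.mono_left hxx'))

theorem map_inf_le_map_inf [BooleanAlgebra α] [BooleanAlgebra β]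
    {u : α → β} {d : β → α} (h : IsConjugate u d) (x : α) (y : β) :
    u x ⊓ y ≤ u (x ⊓ d y) := by
  set z := u (x ⊓ d y)
  have hz : Disjoint (x ⊓ d y) (d zᶜ) := (h _ _).1 disjoint_compl_right
  have hd : d (y ⊓ zᶜ) ≤ d y ⊓ d zᶜ := h.symm.monotone.map_inf_le y zᶜ
  have hx : Disjoint x (d (y ⊓ zᶜ)) := (disjoint_assoc.1 hz).mono_right hd
  exact disjoint_compl_right_iff.1 (disjoint_assoc.2 ((h _ _).2 hx))

theorem isParallel [BooleanAlgebra α] {u d : α → α} (h : IsConjugate u d) :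
    IsParallel u d := by
  refine fun x y ↦ ⟨h.map_inf_le_map_inf x y, ?_⟩
  simpa only [inf_comm] using h.symm.map_inf_le_map_inf y x

end IsConjugate

theorem IsParallel.isConjugate {L : Type*} [SemilatticeInf L] [OrderBot L] {u d : L → L}
    (h : IsParallel u d) (hu : u ⊥ = ⊥) (hd : d ⊥ = ⊥) : IsConjugate u d := by
  intro x y
  simp only [disjoint_iff]
  constructor
  · intro hxy
    simpa only [hxy, hd, le_bot_iff] using (h x y).2
  · intro hxy
    simpa only [hxy, hu, le_bot_iff] using (h x y).1

theorem isParallel_iff_isConjugate {L : Type*} [BooleanAlgebra L] {u d : L → L}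
    (hu : u ⊥ = ⊥) (hd : d ⊥ = ⊥) : IsParallel u d ↔ IsConjugate u d :=
  ⟨fun h ↦ h.isConjugate hu hd, IsConjugate.isParallel⟩

section UnionPreserving

variable {α β : Type*} {f : Set α → Set β}

theorem map_empty_of_map_sUnion (hf : ∀ 𝒮 : Set (Set α), f (⋃₀ 𝒮) = ⋃ A ∈ 𝒮, f A) :
    f ∅ = ∅ := by
  simpa using hf ∅

theorem eq_biUnion_singleton_of_map_sUnion
    (hf : ∀ 𝒮 : Set (Set α), f (⋃₀ 𝒮) = ⋃ A ∈ 𝒮, f A) (X : Set α) :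
    f X = ⋃ x ∈ X, f {x} := by
  simpa only [Set.sUnion_image, Set.biUnion_of_singleton, Set.biUnion_image] using
    hf ((fun x ↦ {x}) '' X)

theorem disjoint_map_iff_of_map_sUnion
    (hf : ∀ 𝒮 : Set (Set α), f (⋃₀ 𝒮) = ⋃ A ∈ 𝒮, f A) (X : Set α) (Y : Set β) :
    Disjoint (f X) Y ↔ ∀ x ∈ X, ∀ y ∈ Y, y ∉ f {x} := by
  rw [eq_biUnion_singleton_of_map_sUnion hf X]
  simp only [Set.disjoint_iUnion_left]
  simp only [Set.disjoint_right]

end UnionPreserving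

theorem isConjugate_iff_singleton {α β : Type*} {u : Set α → Set β} {d : Set β → Set α}
    (hu : ∀ 𝒮 : Set (Set α), u (⋃₀ 𝒮) = ⋃ A ∈ 𝒮, u A)
    (hd : ∀ 𝒮 : Set (Set β), d (⋃₀ 𝒮) = ⋃ A ∈ 𝒮, d A) :
    IsConjugate u d ↔ ∀ x y, x ∈ d {y} ↔ y ∈ u {x} := by
  constructor
  · intro h x y
    have hxy : y ∉ u {x} ↔ x ∉ d {y} := by
      simpa only [Set.disjoint_singleton_left, Set.disjoint_singleton_right] using h {x} {y}
    exact (not_iff_not.1 hxy).symm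
  · intro h X Y
    calc Disjoint (u X) Y
      _ ↔ ∀ x ∈ X, ∀ y ∈ Y, y ∉ u {x} := disjoint_map_iff_of_map_sUnion hu X Y
      _ ↔ ∀ y ∈ Y, ∀ x ∈ X, x ∉ d {y} := by simp only [h]; tauto
      _ ↔ Disjoint (d Y) X := (disjoint_map_iff_of_map_sUnion hd Y X).symm
      _ ↔ Disjoint X (d Y) := disjoint_comm

/-- For union-preserving set operators, being parallel is equivalent to the
singleton correspondence `x ∈ d {y} ↔ y ∈ u {x}`. -/
theorem parallel_iff_singleton {S : Type*} (u d : Set S → Set S)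
    (hu : ∀ 𝒮 : Set (Set S), u (⋃₀ 𝒮) = ⋃ A ∈ 𝒮, u A)
    (hd : ∀ 𝒮 : Set (Set S), d (⋃₀ 𝒮) = ⋃ A ∈ 𝒮, d A) :
    IsParallel u d ↔ ∀ x y : S, x ∈ d {y} ↔ y ∈ u {x} :=
  (isParallel_iff_isConjugate (map_empty_of_map_sUnion hu) (map_empty_of_map_sUnion hd)).trans
    (isConjugate_iff_singleton hu hd)
end

section
/- Let L be a frame and u, d : L → L monotone parallel cones. If a, b, c, e ∈ L satisfy u(a) ⊓ b = u(c) ⊓ e and a ⊓ d(b) = c ⊓ d(e), then for all x, y ∈ L: u(a ⊓ x) ⊓ (b ⊓ y) = u(c ⊓ x) ⊓ (e ⊓ y) and (a ⊓ x) ⊓ d(b ⊓ y) = (c ⊓ x) ⊓ d(e ⊓ y). (Hence the relation identifying rectangles with equal reduced cones is a meet-semilattice congruence.) -/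
/-! The meet `u (a ⊓ x) ⊓ (b ⊓ y)` depends on `a` and `b` only through `a ⊓ d b` and `u a ⊓ b`:
parallelism lets `a` be cut down to `a ⊓ d b` inside `u`, and monotonicity lets `b` be cut down to
`u a ⊓ b` outside it. Parallelism is symmetric in `u` and `d`, so the same holds for
`(a ⊓ x) ⊓ d (b ⊓ y)`. -/

namespace IsParallel

variable {L : Type*} [SemilatticeInf L] {u d : L → L}

theorem symm (h : IsParallel u d) : IsParallel d u := fun x y =>
  ⟨by simpa only [inf_comm] using (h y x).2, by simpa only [inf_comm] using (h y x).1⟩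

theorem map_inf_map_inf_self (h : IsParallel u d) (hu : Monotone u) (x y : L) :
    u (x ⊓ d y) ⊓ y = u x ⊓ y :=
  le_antisymm (inf_le_inf_right y (hu inf_le_left)) (le_inf (h x y).1 inf_le_right)

theorem map_inf_inf_inf (h : IsParallel u d) (hu : Monotone u) (a b x y : L) :
    u (a ⊓ x) ⊓ (b ⊓ y) = u (a ⊓ d b ⊓ x) ⊓ (u a ⊓ b ⊓ y) := by
  have hua : u (a ⊓ d b ⊓ x) ≤ u a := hu (inf_le_left.trans inf_le_left)
  calc
    u (a ⊓ x) ⊓ (b ⊓ y) = u (a ⊓ x ⊓ d b) ⊓ b ⊓ y := by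
      rw [h.map_inf_map_inf_self hu, inf_assoc]
    _ = u (a ⊓ d b ⊓ x) ⊓ u a ⊓ b ⊓ y := by rw [inf_right_comm a, inf_eq_left.mpr hua]
    _ = u (a ⊓ d b ⊓ x) ⊓ (u a ⊓ b ⊓ y) := by simp only [inf_assoc]

theorem inf_inf_map_inf (h : IsParallel u d) (hd : Monotone d) (a b x y : L) :
    a ⊓ x ⊓ d (b ⊓ y) = a ⊓ d b ⊓ x ⊓ d (u a ⊓ b ⊓ y) := by
  rw [inf_comm, h.symm.map_inf_inf_inf hd, inf_comm, inf_comm (d b), inf_comm b]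

end IsParallel

theorem sim_meet_congruence_general {L : Type*} [SemilatticeInf L] (u d : L → L)
    (hum : Monotone u) (hdm : Monotone d) (hpar : IsParallel u d)
    (a b c e : L) (h₁ : u a ⊓ b = u c ⊓ e) (h₂ : a ⊓ d b = c ⊓ d e) (x y : L) :
    u (a ⊓ x) ⊓ (b ⊓ y) = u (c ⊓ x) ⊓ (e ⊓ y) ∧
      (a ⊓ x) ⊓ d (b ⊓ y) = (c ⊓ x) ⊓ d (e ⊓ y) := by
  constructor
  · rw [hpar.map_inf_inf_inf hum a b, hpar.map_inf_inf_inf hum c e, h₁, h₂]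
  · rw [hpar.inf_inf_map_inf hdm a b, hpar.inf_inf_map_inf hdm c e, h₁, h₂]

/-- The relation identifying rectangles with equal reduced cones is a
meet-semilattice congruence (for monotone parallel cones on a frame). -/
theorem sim_meet_congruence {L : Type*} [Order.Frame L] (u d : L → L)
    (hum : Monotone u) (hdm : Monotone d) (hpar : IsParallel u d)
    (a b c e : L) (h₁ : u a ⊓ b = u c ⊓ e) (h₂ : a ⊓ d b = c ⊓ d e) :
    ∀ x y : L,
      u (a ⊓ x) ⊓ (b ⊓ y) = u (c ⊓ x) ⊓ (e ⊓ y) ∧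
      (a ⊓ x) ⊓ d (b ⊓ y) = (c ⊓ x) ⊓ d (e ⊓ y) :=
  sim_meet_congruence_general u d hum hdm hpar a b c e h₁ h₂
end

section
/- Let L, M be frames and s, t : L → M open frame homomorphisms, with left adjoints s_! ⊣ s and t_! ⊣ t satisfying Frobenius reciprocity. Write Up = t_! ∘ s and Down = s_! ∘ t. Then for all A, B, C, D ∈ L: s(A) ⊓ t(B) = s(C) ⊓ t(D) if and only if Up(A) ⊓ B = Up(C) ⊓ D and A ⊓ Down(B) = C ⊓ Down(D). -/
/-!
The pairing `m ↦ (s₁ m, t₁ m)` is left adjoint to `(A, B) ↦ s A ⊓ t B`. On the range of a right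
adjoint the left adjoint is injective, so a rectangle is determined by its two projections, and
Frobenius reciprocity computes these as `A ⊓ s₁ (t B)` and `t₁ (s A) ⊓ B`.
-/

theorem u_eq_u_iff_l_u_eq_l_u {α β : Type*} [Preorder α] [PartialOrder β] {l : β → α} {u : α → β}
    (gc : GaloisConnection l u) {a b : α} : u a = u b ↔ l (u a) = l (u b) := by
  refine ⟨congrArg l, fun h => ?_⟩
  rw [← gc.u_l_u_eq_u a, h, gc.u_l_u_eq_u]

section Rectangle

variable {K L M : Type*} [SemilatticeInf M] {s : K → M} {t : L → M} {s₁ : M → K} {t₁ : M → L}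

theorem galoisConnection_prodMk_inf [Preorder K] [Preorder L]
    (hs : GaloisConnection s₁ s) (ht : GaloisConnection t₁ t) :
    GaloisConnection (fun m => (s₁ m, t₁ m)) (fun p : K × L => s p.1 ⊓ t p.2) := fun m p => by
  rw [Prod.le_def, le_inf_iff, hs m p.1, ht m p.2]

theorem rectangle_eq_iff_projections_eq [Preorder K] [Preorder L]
    (hs : GaloisConnection s₁ s) (ht : GaloisConnection t₁ t) {A C : K} {B D : L} :
    s A ⊓ t B = s C ⊓ t D ↔
      t₁ (s A ⊓ t B) = t₁ (s C ⊓ t D) ∧ s₁ (s A ⊓ t B) = s₁ (s C ⊓ t D) := by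
  rw [u_eq_u_iff_l_u_eq_l_u (galoisConnection_prodMk_inf hs ht) (a := (A, B)) (b := (C, D)),
    Prod.mk_inj, and_comm]

theorem rectangle_eq_iff_sim_general [SemilatticeInf K] [SemilatticeInf L]
    (hs : GaloisConnection s₁ s) (ht : GaloisConnection t₁ t)
    (hsF : ∀ (b : M) (a : K), s₁ (b ⊓ s a) = s₁ b ⊓ a)
    (htF : ∀ (b : M) (a : L), t₁ (b ⊓ t a) = t₁ b ⊓ a) (A : K) (B : L) (C : K) (D : L) :
    s A ⊓ t B = s C ⊓ t D ↔
      t₁ (s A) ⊓ B = t₁ (s C) ⊓ D ∧ A ⊓ s₁ (t B) = C ⊓ s₁ (t D) := by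
  have source_projection (X : K) (Y : L) : s₁ (s X ⊓ t Y) = X ⊓ s₁ (t Y) := by
    rw [inf_comm, hsF, inf_comm]
  rw [rectangle_eq_iff_projections_eq hs ht, htF, htF, source_projection, source_projection]

end Rectangle

/-- For a localic relation with open source and target maps (abstracted as open
frame homomorphisms `s, t`), two rectangles restrict to the same open of the
relation iff they have the same reduced cones. -/
theorem rectangle_eq_iff_sim {L M : Type*} [Order.Frame L] [Order.Frame M]
    (s t : FrameHom L M) (s₁ t₁ : M → L)
    (hs : GaloisConnection s₁ ⇑s) (ht : GaloisConnection t₁ ⇑t)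
    (hsF : ∀ (b : M) (a : L), s₁ (b ⊓ s a) = s₁ b ⊓ a)
    (htF : ∀ (b : M) (a : L), t₁ (b ⊓ t a) = t₁ b ⊓ a) :
    ∀ A B C D : L,
      s A ⊓ t B = s C ⊓ t D ↔
        (t₁ (s A) ⊓ B = t₁ (s C) ⊓ D ∧ A ⊓ s₁ (t B) = C ⊓ s₁ (t D)) :=
  rectangle_eq_iff_sim_general hs ht hsF htF
end

section
/- Let L, M, N be frames, g : L → M a frame homomorphism, and e : M → N an injective frame homomorphism, and suppose the composite f := e ∘ g : L → N is open, with left adjoint f_! : N → L satisfying the Galois connection f_! ⊣ f and Frobenius reciprocity f_!(n ⊓ f(l)) = f_!(n) ⊓ l. Then g is open with left adjoint f_! ∘ e: there is a Galois connection (f_! ∘ e) ⊣ g and Frobenius reciprocity (f_! ∘ e)(m ⊓ g(l)) = (f_! ∘ e)(m) ⊓ l holds for all m ∈ M, l ∈ L. (Localic reading: if g ∘ e' is open and e' is an epimorphism of locales, then g is open with g_! = f_! ∘ e'⁻¹.) -/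
theorem galoisConnection_comp_orderEmbedding {L M N : Type*} [Preorder L] [Preorder M]
    [Preorder N] {g : L → M} (e : M ↪o N) {f₁ : N → L} (hgc : GaloisConnection f₁ (e ∘ g)) :
    GaloisConnection (f₁ ∘ e) g := fun m l =>
  calc
    f₁ (e m) ≤ l ↔ e m ≤ e (g l) := hgc (e m) l
    _ ↔ m ≤ g l := e.le_iff_le

theorem frobenius_comp_infHomClass {F L M N : Type*} [Min L] [Min M] [Min N] [FunLike F M N]
    [InfHomClass F M N] {g : L → M} (e : F) {f₁ : N → L}
    (hF : ∀ (n : N) (l : L), f₁ (n ⊓ e (g l)) = f₁ n ⊓ l) (m : M) (l : L) :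
    (f₁ ∘ e) (m ⊓ g l) = (f₁ ∘ e) m ⊓ l :=
  calc
    f₁ (e (m ⊓ g l)) = f₁ (e m ⊓ e (g l)) := by rw [map_inf]
    _ = f₁ (e m) ⊓ l := hF (e m) l

theorem open_descends_along_epi_general {F L M N : Type*} [SemilatticeInf L] [SemilatticeInf M]
    [SemilatticeInf N] [FunLike F M N] [InfHomClass F M N] (g : L → M) (e : F)
    (he : Function.Injective e) (f₁ : N → L) (hgc : GaloisConnection f₁ (e ∘ g))
    (hF : ∀ (n : N) (l : L), f₁ (n ⊓ e (g l)) = f₁ n ⊓ l) :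
    GaloisConnection (f₁ ∘ e) g ∧
      ∀ (m : M) (l : L), (f₁ ∘ e) (m ⊓ g l) = (f₁ ∘ e) m ⊓ l :=
  -- An injective meet-preserving map reflects the order, since `a ≤ b ↔ a ⊓ b = a`.
  ⟨galoisConnection_comp_orderEmbedding (orderEmbeddingOfInjective e he) hgc,
    frobenius_comp_infHomClass e hF⟩

/-- Openness descends along epimorphisms: if `e` is an injective frame
homomorphism and the composite `e ∘ g` is open, then `g` is open with left
adjoint `f₁ ∘ e`. -/
theorem open_descends_along_epi {L M N : Type*} [Order.Frame L] [Order.Frame M]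
    [Order.Frame N] (g : FrameHom L M) (e : FrameHom M N)
    (he : Function.Injective e) (f₁ : N → L)
    (hgc : GaloisConnection f₁ (⇑e ∘ ⇑g))
    (hF : ∀ (n : N) (l : L), f₁ (n ⊓ e (g l)) = f₁ n ⊓ l) :
    GaloisConnection (f₁ ∘ ⇑e) ⇑g ∧
      ∀ (m : M) (l : L), (f₁ ∘ ⇑e) (m ⊓ g l) = (f₁ ∘ ⇑e) m ⊓ l :=
  open_descends_along_epi_general g e he f₁ hgc hF
end

section
/- Let L be a frame and u, d : L → L monotone functions, and define the Egli–Milner relation x ≼ y iff x ≤ d(y) and y ≤ u(x). Then: (a) for any family with x_i ≼ y_i for all i, one has ⨆_i x_i ≼ ⨆_i y_i; and (b) ≼ is reflexive and transitive (a preorder) if and only if u and d are both inflationary and idempotent. -/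
/-- The Egli–Milner relation `x ≼ y` induced by an upper cone `u` and a lower cone `d`, both encoded
as bare endofunctions; it compares `x` and `y` by mutual approximation through the cones. -/
def EgliMilner {L : Type*} [LE L] (u d : L → L) (x y : L) : Prop :=
  x ≤ d y ∧ y ≤ u x

theorem swap_egliMilner {L : Type*} [LE L] (u d : L → L) :
    Function.swap (EgliMilner u d) = EgliMilner d u :=
  funext₂ fun _ _ => propext and_comm

theorem refl_egliMilner_iff {L : Type*} [LE L] {u d : L → L} :
    Std.Refl (EgliMilner u d) ↔ (∀ x, x ≤ u x) ∧ ∀ x, x ≤ d x :=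
  ⟨fun h => ⟨fun x => (h.refl x).2, fun x => (h.refl x).1⟩,
    fun ⟨hu, hd⟩ => ⟨fun x => ⟨hd x, hu x⟩⟩⟩

section Preorder

variable {L : Type*} [Preorder L] {u d : L → L}

theorem le_apply_of_isLUB_of_forall_le {ι M : Type*} [Preorder M] {f : M → L} (hf : Monotone f)
    {s : Set ι} {x : ι → L} {y : ι → M} {a : L} {b : M} (h : ∀ i ∈ s, x i ≤ f (y i))
    (ha : IsLUB (x '' s) a) (hb : b ∈ upperBounds (y '' s)) : a ≤ f b :=
  ha.2 <| Set.forall_mem_image.2 fun i hi =>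
    (h i hi).trans (hf (hb (Set.mem_image_of_mem y hi)))

theorem EgliMilner.of_isLUB {ι : Type*} (hum : Monotone u) (hdm : Monotone d) {s : Set ι}
    {x y : ι → L} {a b : L} (h : ∀ i ∈ s, EgliMilner u d (x i) (y i))
    (ha : IsLUB (x '' s) a) (hb : IsLUB (y '' s) b) : EgliMilner u d a b :=
  ⟨le_apply_of_isLUB_of_forall_le hdm (fun i hi => (h i hi).1) ha hb.1,
    le_apply_of_isLUB_of_forall_le hum (fun i hi => (h i hi).2) hb ha.1⟩

theorem egliMilner_apply_right (hu : ∀ x, x ≤ u x) (hd : ∀ x, x ≤ d x) (x : L) :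
    EgliMilner u d x (u x) :=
  ⟨(hu x).trans (hd (u x)), le_rfl⟩

-- The chain `x ≼ u x ≼ u (u x)` composes to `x ≼ u (u x)`.
theorem apply_apply_le_of_isTrans_egliMilner (hu : ∀ x, x ≤ u x) (hd : ∀ x, x ≤ d x)
    (htrans : IsTrans L (EgliMilner u d)) (x : L) : u (u x) ≤ u x :=
  (htrans.trans _ _ _ (egliMilner_apply_right hu hd x) (egliMilner_apply_right hu hd (u x))).2

theorem isTrans_egliMilner (hum : Monotone u) (hdm : Monotone d)
    (huu : ∀ x, u (u x) ≤ u x) (hdd : ∀ x, d (d x) ≤ d x) : IsTrans L (EgliMilner u d) where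
  trans x y z hxy hyz :=
    ⟨calc
        x ≤ d y := hxy.1
        _ ≤ d (d z) := hdm hyz.1
        _ ≤ d z := hdd z,
      calc
        z ≤ u y := hyz.2
        _ ≤ u (u x) := hum hxy.2
        _ ≤ u x := huu x⟩

end Preorder

theorem isPreorder_egliMilner_iff {L : Type*} [PartialOrder L] {u d : L → L}
    (hum : Monotone u) (hdm : Monotone d) :
    IsPreorder L (EgliMilner u d) ↔
      (∀ x, x ≤ u x) ∧ (∀ x, x ≤ d x) ∧ (∀ x, u (u x) = u x) ∧ (∀ x, d (d x) = d x) := by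
  constructor
  · intro hpre
    obtain ⟨hu, hd⟩ := refl_egliMilner_iff.1 hpre.toRefl
    have huu := apply_apply_le_of_isTrans_egliMilner hu hd hpre.toIsTrans
    have hswap : IsTrans L (EgliMilner d u) := by
      rw [← swap_egliMilner u d]
      infer_instance
    have hdd := apply_apply_le_of_isTrans_egliMilner hd hu hswap
    exact ⟨hu, hd, fun x => (huu x).antisymm (hu (u x)), fun x => (hdd x).antisymm (hd (d x))⟩
  · rintro ⟨hu, hd, huu, hdd⟩
    have hrefl := refl_egliMilner_iff.2 ⟨hu, hd⟩
    have htrans := isTrans_egliMilner hum hdm (fun x => (huu x).le) (fun x => (hdd x).le)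
    exact { hrefl, htrans with }

theorem egliMilner_join_and_preorder_general {L : Type*} [PartialOrder L] (u d : L → L)
    (hum : Monotone u) (hdm : Monotone d) :
    (∀ (S : Set (L × L)) (a b : L), (∀ p ∈ S, EgliMilner u d p.1 p.2) →
      IsLUB (Prod.fst '' S) a → IsLUB (Prod.snd '' S) b → EgliMilner u d a b) ∧
    (IsPreorder L (EgliMilner u d) ↔
      (∀ x, x ≤ u x) ∧ (∀ x, x ≤ d x) ∧ (∀ x, u (u x) = u x) ∧ (∀ x, d (d x) = d x)) :=
  ⟨fun _ _ _ => EgliMilner.of_isLUB hum hdm, isPreorder_egliMilner_iff hum hdm⟩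

/-- For monotone cones `u, d` on a frame, the Egli–Milner relation
`x ≼ y ↔ x ≤ d y ∧ y ≤ u x` satisfies the join axiom, and it is a preorder iff
`u` and `d` are inflationary and idempotent. -/
theorem egliMilner_join_and_preorder {L : Type*} [Order.Frame L] (u d : L → L)
    (hum : Monotone u) (hdm : Monotone d) :
    (∀ S : Set (L × L), (∀ p ∈ S, p.1 ≤ d p.2 ∧ p.2 ≤ u p.1) →
      sSup (Prod.fst '' S) ≤ d (sSup (Prod.snd '' S)) ∧
      sSup (Prod.snd '' S) ≤ u (sSup (Prod.fst '' S))) ∧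
    ((Reflexive (fun x y : L => x ≤ d y ∧ y ≤ u x) ∧
        Transitive (fun x y : L => x ≤ d y ∧ y ≤ u x)) ↔
      ((∀ x, x ≤ u x) ∧ (∀ x, x ≤ d x) ∧
        (∀ x, u (u x) = u x) ∧ (∀ x, d (d x) = d x))) := by
  obtain ⟨hjoin, hpreorder⟩ := egliMilner_join_and_preorder_general u d hum hdm
  exact ⟨fun S hS => hjoin S _ _ hS (isLUB_sSup _) (isLUB_sSup _),
    .trans ⟨fun h => { refl := h.1, trans := h.2 }, fun h => ⟨h.refl, h.trans⟩⟩ hpreorder⟩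
end
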